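/- Let f₂(t) = 1/(π(1 + t²)) be the standard Cauchy density and let f₁ be a continuous, bounded, everywhere positive probability density on ℝ, symmetric about 0, with finite second moment ∫_ℝ u² f₁(u) du < ∞. Fix y ∈ ℝ and set f_θ(x) = f₁(y − x)·f₂(x − θ), c_θ = ∫_ℝ f_θ(x) dx. Then for every x ∈ ℝ, lim_{|θ| → ∞} c_θ / f₂(x − θ) = 1, and consequently the conditional posterior density of X given Θ = θ converges pointwise to the likelihood density: f_θ(x)/c_θ → f₁(y − x) as |θ| → ∞ (so the model is robust in parameter, RIP). -/

import Mathlib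

open MeasureTheory Filter

noncomputable section

/-- Standard Cauchy density. -/
def cauchyD (t : ℝ) : ℝ := 1 / (Real.pi * (1 + t ^ 2))

/-- Joint (unnormalised posterior) density `f_θ(x) = f₁(y - x) · f₂(x - θ)`. -/
def fjoint (f₁ f₂ : ℝ → ℝ) (y θ x : ℝ) : ℝ := f₁ (y - x) * f₂ (x - θ)

/-- Normalising constant `c_θ = ∫ f_θ(x) dx`. -/
def cnorm (f₁ f₂ : ℝ → ℝ) (y θ : ℝ) : ℝ := ∫ x, fjoint f₁ f₂ y θ x

/-!
Write `c_θ / f₂ (x - θ) = ∫ f₁ (y - t) · (f₂ (t - θ) / f₂ (x - θ)) dt`. For the Cauchy density both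
`f₂ (t - θ)` and `f₂ (x - θ)` are equivalent to `1 / (π θ²)`, so the ratio in the integrand tends to
`1`. Peetre's inequality bounds it by `2 (1 + (x - t)²)` uniformly in `θ`, and the finite second
moment makes this an integrable majorant, so that dominated convergence applies.
-/

open Asymptotics Topology

instance isCountablyGenerated_cocompact {E : Type*} [SeminormedAddGroup E] [ProperSpace E] :
    (cocompact E).IsCountablyGenerated := by
  rw [← Metric.cobounded_eq_cocompact, ← comap_norm_atTop]
  infer_instance

section NormalisingConstant

variable {f₁ f₂ g : ℝ → ℝ} {x y L : ℝ} {l : Filter ℝ}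

theorem cnorm_div_eq_integral (f₁ f₂ : ℝ → ℝ) (x y θ : ℝ) :
    cnorm f₁ f₂ y θ / f₂ (x - θ) = ∫ t, f₂ (t - θ) / f₂ (x - θ) * f₁ (y - t) := by
  rw [cnorm, ← integral_div]
  congr with t
  rw [fjoint, mul_comm, mul_div_right_comm]

theorem tendsto_cnorm_div_of_dominated [l.IsCountablyGenerated]
    (hf₁ : AEStronglyMeasurable f₁) (hf₂ : AEStronglyMeasurable f₂)
    (hbound : ∀ᶠ θ in l, ∀ᵐ t, |f₂ (t - θ) / f₂ (x - θ)| ≤ g t)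
    (hint : Integrable fun t => g t * f₁ (y - t))
    (hlim : ∀ᵐ t, Tendsto (fun θ => f₂ (t - θ) / f₂ (x - θ)) l (𝓝 1)) :
    Tendsto (fun θ => cnorm f₁ f₂ y θ / f₂ (x - θ)) l (𝓝 (∫ t, f₁ t)) := by
  simp only [cnorm_div_eq_integral]
  rw [← integral_sub_left_eq_self f₁ volume y]
  have hf₁y : AEStronglyMeasurable fun t => f₁ (y - t) :=
    hf₁.comp_measurePreserving (Measure.measurePreserving_sub_left volume y)
  refine tendsto_integral_filter_of_dominated_convergence _ (.of_forall fun θ => ?_) ?_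
    hint.norm ?_
  · have hf₂θ : AEStronglyMeasurable fun t => f₂ (t - θ) :=
      hf₂.comp_measurePreserving (measurePreserving_sub_right volume θ)
    simp only [div_eq_mul_inv]
    exact (hf₂θ.mul_const _).mul hf₁y
  · filter_upwards [hbound] with θ hθ
    filter_upwards [hθ] with t ht
    rw [norm_mul, norm_mul]
    gcongr
    exact ht.trans (le_abs_self _)
  · filter_upwards [hlim] with t ht
    simpa only [one_mul] using ht.mul_const (f₁ (y - t))

theorem tendsto_fjoint_div_cnorm (hL : L ≠ 0)
    (h : Tendsto (fun θ => cnorm f₁ f₂ y θ / f₂ (x - θ)) l (𝓝 L)) :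
    Tendsto (fun θ => fjoint f₁ f₂ y θ x / cnorm f₁ f₂ y θ) l (𝓝 (f₁ (y - x) / L)) := by
  simpa only [fjoint, Pi.div_def, div_div_eq_mul_div] using
    (tendsto_const_nhds (x := f₁ (y - x))).div h hL

end NormalisingConstant

section CauchyDensity

theorem cauchyD_pos (t : ℝ) : 0 < cauchyD t := by
  unfold cauchyD
  positivity

theorem continuous_cauchyD : Continuous cauchyD :=
  continuous_const.div (by fun_prop) fun t => by positivity

theorem one_add_sub_sq_isEquivalent (x : ℝ) :
    (fun θ : ℝ => 1 + (x - θ) ^ 2) ~[cocompact ℝ] fun θ => θ ^ 2 := by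
  have norm_neg_atTop : Tendsto (norm ∘ fun θ : ℝ => -θ) (cocompact ℝ) atTop := by
    simpa only [Function.comp_def, norm_neg] using tendsto_norm_cocompact_atTop (E := ℝ)
  have norm_sq_atTop : Tendsto (norm ∘ fun θ : ℝ => θ ^ 2) (cocompact ℝ) atTop := by
    simpa only [Function.comp_def, norm_pow] using
      (tendsto_pow_atTop two_ne_zero).comp (tendsto_norm_cocompact_atTop (E := ℝ))
  have sub_isEquivalent : (fun θ : ℝ => x - θ) ~[cocompact ℝ] fun θ => -θ := by
    simpa only [sub_eq_add_neg] using
      IsEquivalent.refl.const_add_of_norm_tendsto_atTop (c := x) norm_neg_atTop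
  have sub_sq_isEquivalent : (fun θ : ℝ => (x - θ) ^ 2) ~[cocompact ℝ] fun θ => θ ^ 2 := by
    simpa only [Pi.pow_def, neg_sq] using sub_isEquivalent.pow 2
  exact sub_sq_isEquivalent.const_add_of_norm_tendsto_atTop norm_sq_atTop

theorem cauchyD_sub_isEquivalent (x : ℝ) :
    (fun θ => cauchyD (x - θ)) ~[cocompact ℝ] fun θ => 1 / (Real.pi * θ ^ 2) :=
  .div .refl (.mul .refl (one_add_sub_sq_isEquivalent x))

theorem tendsto_cauchyD_sub_div_cauchyD_sub (t x : ℝ) :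
    Tendsto (fun θ => cauchyD (t - θ) / cauchyD (x - θ)) (cocompact ℝ) (𝓝 1) :=
  (isEquivalent_iff_tendsto_one (.of_forall fun _ => (cauchyD_pos _).ne')).1
    ((cauchyD_sub_isEquivalent t).trans (cauchyD_sub_isEquivalent x).symm)

theorem one_add_sq_le_two_mul_one_add_sub_sq_mul_one_add_sq (a b : ℝ) :
    1 + a ^ 2 ≤ 2 * (1 + (a - b) ^ 2) * (1 + b ^ 2) := by
  nlinarith [sq_nonneg (a - 2 * b), sq_nonneg ((a - b) * b)]

theorem cauchyD_div_cauchyD_le (a b : ℝ) :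
    cauchyD b / cauchyD a ≤ 2 * (1 + (a - b) ^ 2) := by
  have ratio_eq : cauchyD b / cauchyD a = (1 + a ^ 2) / (1 + b ^ 2) := by
    unfold cauchyD
    field_simp
  rw [ratio_eq, div_le_iff₀ (by positivity)]
  exact one_add_sq_le_two_mul_one_add_sub_sq_mul_one_add_sq a b

end CauchyDensity

theorem integrable_sub_sq_mul {μ : Measure ℝ} {f : ℝ → ℝ} (hf : Integrable f μ)
    (hmom : Integrable (fun u => u ^ 2 * f u) μ) (c : ℝ) :
    Integrable (fun u => (u - c) ^ 2 * f u) μ := by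
  refine ((hmom.norm.add (hf.norm.const_mul (c ^ 2))).const_mul 2).mono'
    (AEStronglyMeasurable.mul (by fun_prop) hf.1) (.of_forall fun u => ?_)
  have sub_sq_le : (u - c) ^ 2 ≤ 2 * (u ^ 2 + c ^ 2) := by nlinarith [sq_nonneg (u + c)]
  calc ‖(u - c) ^ 2 * f u‖ = (u - c) ^ 2 * ‖f u‖ := by
        rw [norm_mul, Real.norm_of_nonneg (sq_nonneg _)]
    _ ≤ 2 * (u ^ 2 + c ^ 2) * ‖f u‖ := by gcongr
    _ = 2 * (‖u ^ 2 * f u‖ + c ^ 2 * ‖f u‖) := by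
        rw [norm_mul, Real.norm_of_nonneg (sq_nonneg u)]
        ring

theorem integrable_one_add_sub_sq_mul_comp_sub_left {f : ℝ → ℝ} (hf : Integrable f)
    (hmom : Integrable fun u => u ^ 2 * f u) (x y : ℝ) :
    Integrable fun t => (1 + (x - t) ^ 2) * f (y - t) := by
  refine ((hf.add (integrable_sub_sq_mul hf hmom (y - x))).comp_sub_left y).congr
    (.of_forall fun t => ?_)
  simp only [Pi.add_apply]
  ring

theorem cauchy_prior_rip_general {f₁ : ℝ → ℝ} (hprob : ∫ t, f₁ t = 1)
    (hmom : Integrable fun u => u ^ 2 * f₁ u) (x y : ℝ) :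
    Tendsto (fun θ => cnorm f₁ cauchyD y θ / cauchyD (x - θ)) (cocompact ℝ) (𝓝 1) ∧
      Tendsto (fun θ => fjoint f₁ cauchyD y θ x / cnorm f₁ cauchyD y θ) (cocompact ℝ)
        (𝓝 (f₁ (y - x))) := by
  have hf₁ : Integrable f₁ := .of_integral_ne_zero (by simp [hprob])
  have ratio_le (θ t : ℝ) : |cauchyD (t - θ) / cauchyD (x - θ)| ≤ 2 * (1 + (x - t) ^ 2) := by
    rw [abs_of_pos (div_pos (cauchyD_pos _) (cauchyD_pos _))]
    simpa only [sub_sub_sub_cancel_right] using cauchyD_div_cauchyD_le (x - θ) (t - θ)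
  have majorant_integrable : Integrable fun t => 2 * (1 + (x - t) ^ 2) * f₁ (y - t) := by
    simpa only [mul_assoc] using
      (integrable_one_add_sub_sq_mul_comp_sub_left hf₁ hmom x y).const_mul 2
  have hc : Tendsto (fun θ => cnorm f₁ cauchyD y θ / cauchyD (x - θ)) (cocompact ℝ) (𝓝 1) :=
    hprob ▸ tendsto_cnorm_div_of_dominated hf₁.1 continuous_cauchyD.aestronglyMeasurable
      (.of_forall fun θ => .of_forall (ratio_le θ)) majorant_integrable
      (.of_forall fun t => tendsto_cauchyD_sub_div_cauchyD_sub t x)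
  exact ⟨hc, by simpa only [div_one] using tendsto_fjoint_div_cnorm one_ne_zero hc⟩

/-- with standard Cauchy prior error `f₂` and a symmetric, continuous,
bounded, positive likelihood density `f₁` with finite second moment, the model is robust
in parameter (RIP): `c_θ / f₂(x - θ) → 1` and `π(x | θ) → f₁(y - x)` as `|θ| → ∞`. -/
theorem cauchy_prior_rip (f₁ : ℝ → ℝ) (y : ℝ)
    (hf₁c : Continuous f₁) (hf₁pos : ∀ t, 0 < f₁ t)
    (hf₁bdd : ∃ M, ∀ t, f₁ t ≤ M) (hf₁sym : ∀ t, f₁ (-t) = f₁ t)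
    (hf₁prob : ∫ t, f₁ t = 1)
    (hf₁mom : Integrable (fun u => u ^ 2 * f₁ u)) :
    ∀ x : ℝ,
      Tendsto (fun θ => cnorm f₁ cauchyD y θ / cauchyD (x - θ)) (cocompact ℝ) (nhds 1) ∧
      Tendsto (fun θ => fjoint f₁ cauchyD y θ x / cnorm f₁ cauchyD y θ) (cocompact ℝ)
        (nhds (f₁ (y - x))) := by
  exact fun x => cauchy_prior_rip_general hf₁prob hf₁mom x y
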